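/- arXiv:2409.06475 — 2 statements merged into one kernel-verified Lean document; each statement's English description precedes it below -/
import Mathlib

section
/- Let f : E → B be a dominant morphism of irreducible varieties over an algebraically closed field, and let U ⊆ E be a dense open subset. Then there exists a dense open subset B₀ ⊆ B such that for all b ∈ B₀, the intersection f⁻¹(b) ∩ U is dense in the fibre f⁻¹(b). -/
open AlgebraicGeometry CategoryTheory

/-! Affine-locally, let `A` be a domain, `S` an `A`-algebra of finite type and `g` a regular element
of `S`. Present `S` as a quotient of a polynomial ring. By Dickson's lemma, finitely many elements
of the preimage `I` of `gS` have leading monomials that generate all leading monomials of `I`; once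
the product `c` of their leading coefficients is inverted, division with remainder shows that the
standard monomials span an `A`-module complement of `I`. Because `gS` is complemented away from `c`,
`pS ∩ gS = p(gS) = g(pS)` there for every prime `p` of `A`, so `g` stays regular modulo `pS`.
Minimal primes over a proper ideal do not contain elements regular modulo it, so every point of a
fibre over `D(c)` is a specialization of a point of the same fibre lying in `D(g)`. Choosing
`D(g) ⊆ U` and covering the preimage of an affine open of the base by finitely many affine opens
gives the claim. -/

open scoped MonomialOrder Topology

section Saturation

variable {R M : Type*} [CommSemiring R] [AddCommMonoid M] [Module R M]

/-- The saturation `N : c^∞` of a submodule `N` with respect to `c`, which consists of the elements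
that lie in `N` after inverting `c`. It lets statements that hold over `R[1/c]` be expressed inside
`M`, without localizing. -/
def powSaturation (c : R) (N : Submodule R M) : Submodule R M where
  carrier := {x | ∃ n : ℕ, c ^ n • x ∈ N}
  zero_mem' := ⟨0, by simp only [smul_zero, zero_mem]⟩
  add_mem' := by
    rintro x y ⟨n, hx⟩ ⟨m, hy⟩
    refine ⟨m + n, ?_⟩
    rw [smul_add]
    refine N.add_mem ?_ ?_
    · simpa only [pow_add, mul_smul] using N.smul_mem (c ^ m) hx
    · simpa only [pow_add, mul_comm (c ^ m), mul_smul] using N.smul_mem (c ^ n) hy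
  smul_mem' r x := by
    rintro ⟨n, hx⟩
    exact ⟨n, smul_comm (c ^ n) r x ▸ N.smul_mem r hx⟩

theorem le_powSaturation (c : R) (N : Submodule R M) : N ≤ powSaturation c N :=
  fun x hx ↦ ⟨0, by rwa [pow_zero, one_smul]⟩

theorem mem_powSaturation_of_pow_smul_mem {c : R} {N : Submodule R M} {x : M} {n : ℕ}
    (hx : c ^ n • x ∈ powSaturation c N) : x ∈ powSaturation c N := by
  obtain ⟨m, hm⟩ := hx
  exact ⟨m + n, by rwa [pow_add, mul_smul]⟩

theorem smul_powSaturation_le (c : R) (I : Ideal R) (N : Submodule R M) :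
    I • powSaturation c N ≤ powSaturation c (I • N) := by
  refine Submodule.smul_le.mpr ?_
  rintro r hr x ⟨n, hx⟩
  exact ⟨n, smul_comm (c ^ n) r x ▸ Submodule.smul_mem_smul hr hx⟩

theorem powSaturation_le_of_isPrime {c : R} {I P : Ideal R} (hP : P.IsPrime) (hIP : I ≤ P)
    (hc : c ∉ P) : powSaturation c I ≤ P := by
  rintro x ⟨n, hx⟩
  exact (hP.mem_or_mem (hIP hx)).resolve_left fun h ↦ hc (hP.mem_of_pow_mem n h)

end Saturation

theorem smul_top_inf_le_powSaturation {R M : Type*} [CommRing R] [AddCommGroup M] [Module R M]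
    {c : R} {N L : Submodule R M} (hdisj : Disjoint L N) (htop : powSaturation c (L ⊔ N) = ⊤)
    (I : Ideal R) : (I • ⊤ : Submodule R M) ⊓ N ≤ powSaturation c (I • N) := by
  rintro x ⟨hxI, hxN⟩
  rw [← htop] at hxI
  obtain ⟨n, hx⟩ := smul_powSaturation_le c I (L ⊔ N) hxI
  rw [Submodule.smul_sup] at hx
  obtain ⟨l, hl, y, hy, hly⟩ := Submodule.mem_sup.mp hx
  have hlN : l ∈ N := by
    rw [← add_sub_cancel_right l y, hly]
    exact N.sub_mem (N.smul_mem _ hxN) (Submodule.smul_le_right hy)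
  have hl0 : l = 0 := Submodule.disjoint_def.mp hdisj l (Submodule.smul_le_right hl) hlN
  exact ⟨n, by rwa [← hly, hl0, zero_add]⟩

theorem exists_finite_subset_forall_exists_apply_le {α β : Type*} [PartialOrder α]
    [WellQuasiOrderedLE α] (f : β → α) (s : Set β) :
    ∃ t ⊆ s, t.Finite ∧ ∀ a ∈ s, ∃ b ∈ t, f b ≤ f a := by
  have hmin : ∃ u ⊆ f '' s, u.Finite ∧ ∀ a ∈ s, ∃ b ∈ u, b ≤ f a := by
    refine ⟨{a | Minimal (· ∈ f '' s) a}, fun a ha ↦ ha.prop,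
      WellQuasiOrderedLE.finite_of_isAntichain (setOfPred_minimal_antichain _), fun a ha ↦ ?_⟩
    obtain ⟨b, hba, hb⟩ :=
      exists_minimal_le_of_wellFoundedLT (· ∈ f '' s) (f a) (Set.mem_image_of_mem f ha)
    exact ⟨b, hb, hba⟩
  simpa only [Set.exists_mem_image] using Set.exists_subset_image_finite_and.mp hmin

section StandardMonomials

open MvPolynomial

variable {σ R : Type*} [CommRing R] {m : MonomialOrder σ}

variable (m) in
/-- The exponents of the standard monomials of a set `B` of polynomials, that is of the monomials
not divisible by the leading monomial of an element of `B`. They index the monomials that can occur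
in a remainder of division by `B`. -/
def standardExponents (B : Set (MvPolynomial σ R)) : Set (σ →₀ ℕ) :=
  {d | ∀ b ∈ B, ¬ m.degree b ≤ d}

theorem disjoint_restrictSupport_standardExponents {B : Set (MvPolynomial σ R)}
    {I : Ideal (MvPolynomial σ R)} (hB : ∀ f ∈ I, f ≠ 0 → ∃ b ∈ B, m.degree b ≤ m.degree f) :
    Disjoint (restrictSupport R (standardExponents m B)) (I.restrictScalars R) := by
  refine Submodule.disjoint_def.mpr fun f hf hfI ↦ ?_
  by_contra hf0
  obtain ⟨b, hb, hbf⟩ := hB f hfI hf0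
  exact (mem_restrictSupport_iff R).mp hf (m.degree_mem_support hf0) b hb hbf

theorem sub_monomial_coeff_mem_restrictSupport {f : MvPolynomial σ R} {d : σ →₀ ℕ}
    (hf : m.degree f ≼[m] d) :
    f - monomial d (f.coeff d) ∈ restrictSupport R {e | e ≺[m] d} := by
  classical
  refine (mem_restrictSupport_iff R).mpr fun e he ↦ ?_
  have hed : e ≠ d := by
    rintro rfl
    simp at he
  have hef : e ∈ f.support := by
    simpa [coeff_monomial, hed.symm] using he
  exact lt_of_le_of_ne ((m.le_degree hef).trans hf) (m.toSyn.injective.ne hed)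

theorem smul_monomial_mem_of_leadingCoeff_dvd {b : MvPolynomial σ R} {c : R} {d : σ →₀ ℕ}
    {N : Submodule R (MvPolynomial σ R)} (hc : m.leadingCoeff b ∣ c) (hbd : m.degree b ≤ d)
    (hb : monomial (d - m.degree b) 1 * b ∈ N) (hN : ∀ e, e ≺[m] d → monomial e 1 ∈ N) :
    c • monomial d 1 ∈ N := by
  obtain ⟨r, rfl⟩ := hc
  set f := monomial (d - m.degree b) (1 : R) * b with hf
  have hcoeff : f.coeff d = m.leadingCoeff b := by
    rw [hf, coeff_monomial_mul', if_pos tsub_le_self, tsub_tsub_cancel_of_le hbd, one_mul]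
    rfl
  have hdeg : m.degree f ≼[m] d := by
    refine m.degree_mul_le.trans ?_
    conv_rhs => rw [← tsub_add_cancel_of_le hbd]
    rw [map_add, map_add]
    exact add_le_add_left (m.degree_monomial_le 1) _
  have hlower : f - monomial d (f.coeff d) ∈ N := by
    have hle : restrictSupport R {e | e ≺[m] d} ≤ N := by
      rw [restrictSupport_eq_span, Submodule.span_le]
      rintro _ ⟨e, he, rfl⟩
      exact hN e he
    exact hle (sub_monomial_coeff_mem_restrictSupport hdeg)
  have hlead : m.leadingCoeff b • monomial d 1 ∈ N := by
    rw [smul_monomial, smul_eq_mul, mul_one, ← hcoeff, ← sub_sub_cancel f (monomial d _)]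
    exact N.sub_mem hb hlower
  rw [mul_comm, mul_smul]
  exact N.smul_mem r hlead

theorem powSaturation_restrictSupport_standardExponents_sup_eq_top {c : R}
    {B : Set (MvPolynomial σ R)} {I : Ideal (MvPolynomial σ R)} (hBI : B ⊆ I)
    (hc : ∀ b ∈ B, m.leadingCoeff b ∣ c) :
    powSaturation c (restrictSupport R (standardExponents m B) ⊔ I.restrictScalars R) = ⊤ := by
  set N := restrictSupport R (standardExponents m B) ⊔ I.restrictScalars R
  have hmonomial (d : σ →₀ ℕ) : monomial d 1 ∈ powSaturation c N := by
    induction d using (InvImage.wf m.toSyn wellFounded_lt).induction with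
    | _ d ih =>
    by_cases hd : d ∈ standardExponents m B
    · exact le_powSaturation c N
        (Submodule.mem_sup_left ((monomial_mem_restrictSupport R).mpr (Or.inl hd)))
    · obtain ⟨b, hbB, hbd⟩ : ∃ b ∈ B, m.degree b ≤ d := by
        simpa only [standardExponents, Set.mem_ofPred_eq, not_forall, not_not, exists_prop] using hd
      refine mem_powSaturation_of_pow_smul_mem (n := 1) ?_
      rw [pow_one]
      refine smul_monomial_mem_of_leadingCoeff_dvd (hc b hbB) hbd ?_ ih
      exact le_powSaturation c N (Submodule.mem_sup_right (I.mul_mem_left _ (hBI hbB)))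
  rw [eq_top_iff, ← restrictSupport_univ, restrictSupport_eq_span, Submodule.span_le]
  rintro _ ⟨d, -, rfl⟩
  exact hmonomial d

end StandardMonomials

section GenericFibre

variable {A : Type*} [CommRing A] [IsDomain A]

theorem exists_disjoint_powSaturation_sup_eq_top_of_mvPolynomial {σ : Type*} [Finite σ]
    (I : Ideal (MvPolynomial σ A)) :
    ∃ c : A, c ≠ 0 ∧ ∃ L : Submodule A (MvPolynomial σ A),
      Disjoint L (I.restrictScalars A) ∧ powSaturation c (L ⊔ I.restrictScalars A) = ⊤ := by
  classical
  let : LinearOrder σ := linearOrderOfSTO WellOrderingRel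
  let m : MonomialOrder σ := MonomialOrder.lex
  obtain ⟨B, hBI, hBfin, hB⟩ := exists_finite_subset_forall_exists_apply_le
    m.degree {f : MvPolynomial σ A | f ∈ I ∧ f ≠ 0}
  refine ⟨∏ b ∈ hBfin.toFinset, m.leadingCoeff b, Finset.prod_ne_zero_iff.mpr fun b hb ↦ ?_,
    MvPolynomial.restrictSupport A (standardExponents m B),
    disjoint_restrictSupport_standardExponents fun f hfI hf ↦ hB f ⟨hfI, hf⟩,
    powSaturation_restrictSupport_standardExponents_sup_eq_top (fun b hb ↦ (hBI hb).1) fun b hb ↦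
      Finset.dvd_prod_of_mem m.leadingCoeff (hBfin.mem_toFinset.mpr hb)⟩
  exact m.leadingCoeff_ne_zero_iff.mpr (hBI (hBfin.mem_toFinset.mp hb)).2

variable {S : Type*} [CommRing S] [Algebra A S] [Algebra.FiniteType A S]

theorem exists_disjoint_powSaturation_sup_eq_top (I : Ideal S) :
    ∃ c : A, c ≠ 0 ∧ ∃ L : Submodule A S,
      Disjoint L (I.restrictScalars A) ∧ powSaturation c (L ⊔ I.restrictScalars A) = ⊤ := by
  obtain ⟨n, π, hπ⟩ := Algebra.FiniteType.iff_quotient_mvPolynomial''.mp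
    (inferInstance : Algebra.FiniteType A S)
  obtain ⟨c, hc, L, hdisj, htop⟩ :=
    exists_disjoint_powSaturation_sup_eq_top_of_mvPolynomial (I.comap π)
  refine ⟨c, hc, L.map π.toLinearMap, Submodule.disjoint_def.mpr ?_, ?_⟩
  · rintro _ ⟨l, hl, rfl⟩ hlI
    rw [Submodule.disjoint_def.mp hdisj l hl hlI, map_zero]
  · have hle : (L ⊔ (I.comap π).restrictScalars A).map π.toLinearMap ≤
        L.map π.toLinearMap ⊔ I.restrictScalars A := by
      rw [Submodule.map_sup]
      refine sup_le_sup_left ?_ _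
      rintro _ ⟨f, hf, rfl⟩
      exact hf
    refine Submodule.eq_top_iff'.mpr fun x ↦ ?_
    obtain ⟨f, rfl⟩ := hπ x
    obtain ⟨k, hk⟩ := Submodule.eq_top_iff'.mp htop f
    exact ⟨k, map_smul π (c ^ k) f ▸ hle (Submodule.mem_map_of_mem hk)⟩

theorem exists_forall_mem_powSaturation_map_of_mul_mem {g : S} (hg : IsLeftRegular g) :
    ∃ c : A, c ≠ 0 ∧ ∀ (p : Ideal A) (y : S), g * y ∈ p.map (algebraMap A S) →
      y ∈ powSaturation (algebraMap A S c) (p.map (algebraMap A S)) := by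
  obtain ⟨c, hc, L, hdisj, htop⟩ :=
    exists_disjoint_powSaturation_sup_eq_top (A := A) (Ideal.span {g})
  refine ⟨c, hc, fun p y hy ↦ ?_⟩
  have hspan : (Ideal.span {g}).restrictScalars A = (⊤ : Submodule A S).map (.mulLeft A g) := by
    ext x
    simp [Ideal.mem_span_singleton', mul_comm g]
  obtain ⟨n, hn⟩ : g * y ∈ powSaturation c (p • (Ideal.span {g}).restrictScalars A) := by
    refine smul_top_inf_le_powSaturation hdisj htop p
      ⟨?_, Ideal.mul_mem_right _ _ (Ideal.mem_span_singleton_self g)⟩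
    rwa [Ideal.smul_top_eq_map]
  rw [hspan, ← Submodule.map_smul'', Ideal.smul_top_eq_map] at hn
  obtain ⟨z, hz, hgz⟩ := hn
  have hzy : z = c ^ n • y := hg (by simpa [mul_smul_comm] using hgz)
  refine ⟨n, ?_⟩
  rw [← map_pow, smul_eq_mul, ← Algebra.smul_def, ← hzy]
  exact hz

theorem exists_isPrime_le_notMem_comap_eq {g : S} (hg : IsLeftRegular g) :
    ∃ c : A, c ≠ 0 ∧ ∀ q : Ideal S, q.IsPrime → algebraMap A S c ∉ q →
      ∃ q' : Ideal S, q'.IsPrime ∧ q' ≤ q ∧ g ∉ q' ∧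
        q'.comap (algebraMap A S) = q.comap (algebraMap A S) := by
  obtain ⟨c, hc, hreg⟩ := exists_forall_mem_powSaturation_map_of_mul_mem (A := A) hg
  refine ⟨c, hc, fun q hq hcq ↦ ?_⟩
  let p := q.comap (algebraMap A S)
  let J := powSaturation (algebraMap A S c) (p.map (algebraMap A S))
  have hJq : J ≤ q := powSaturation_le_of_isPrime hq Ideal.map_comap_le hcq
  obtain ⟨q', hq'J, hq'q⟩ := Ideal.exists_minimalPrimes_le hJq
  have hgJ (y : S) (hy : g * y ∈ J) : y ∈ J := by
    obtain ⟨n, hn⟩ := hy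
    rw [smul_eq_mul, mul_left_comm] at hn
    exact mem_powSaturation_of_pow_smul_mem (hreg p _ hn)
  refine ⟨q', hq'J.isPrime, hq'q, fun hgq' ↦ ?_, (Ideal.comap_mono hq'q).antisymm ?_⟩
  · obtain ⟨y, hyJ, hgy⟩ := Ideal.exists_mul_mem_of_mem_minimalPrimes hq'J hgq'
    exact hyJ (hgJ y hgy)
  · exact Ideal.map_le_iff_le_comap.mp ((le_powSaturation _ _).trans hq'J.le)

end GenericFibre

theorem exists_isOpen_dense_forall_of_isCompact {X Y : Type*} [TopologicalSpace X]
    [TopologicalSpace Y] {f : X → Y} {Q : X → Prop} {K : Set X} (hK : IsCompact K)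
    (h : ∀ x ∈ K, ∃ W ∈ 𝓝 x, ∃ V : Set Y, IsOpen V ∧ Dense V ∧ ∀ x' ∈ W, f x' ∈ V → Q x') :
    ∃ V : Set Y, IsOpen V ∧ Dense V ∧ ∀ x ∈ K, f x ∈ V → Q x := by
  refine hK.induction_on
    (p := fun T ↦ ∃ V : Set Y, IsOpen V ∧ Dense V ∧ ∀ x ∈ T, f x ∈ V → Q x) ?_ ?_ ?_ ?_
  · exact ⟨Set.univ, isOpen_univ, dense_univ, fun x hx ↦ hx.elim⟩
  · rintro s t hst ⟨V, hVo, hVd, hV⟩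
    exact ⟨V, hVo, hVd, fun x hx ↦ hV x (hst hx)⟩
  · rintro s t ⟨V, hVo, hVd, hV⟩ ⟨V', hVo', hVd', hV'⟩
    exact ⟨V ∩ V', hVo.inter hVo', hVd.inter_of_isOpen_left hVd' hVo, fun x hx hfx ↦
      hx.elim (hV x · hfx.1) (hV' x · hfx.2)⟩
  · intro x hx
    obtain ⟨W, hW, V, hV⟩ := h x hx
    exact ⟨W, mem_nhdsWithin_of_mem_nhds hW, V, hV⟩

universe u

section Fibre

variable {E B : Scheme.{u}} (f : E ⟶ B)

theorem apply_fromSpec_eq_fromSpec_SpecMap_appLE {V : B.Opens} (hV : IsAffineOpen V)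
    {W : E.Opens} (hW : IsAffineOpen W) (hWV : W ≤ f ⁻¹ᵁ V) (q : Spec Γ(E, W)) :
    f (hW.fromSpec q) = hV.fromSpec (Spec.map (f.appLE V W hWV) q) := by
  rw [← Scheme.Hom.comp_apply, ← Scheme.Hom.comp_apply, hV.SpecMap_appLE_fromSpec f hW hWV]

variable [IsIntegral E] [IsIntegral B] [LocallyOfFiniteType f]

theorem exists_isOpen_dense_forall_mem_closure_of_isAffineOpen {U : Set E} (hUo : IsOpen U)
    (hUd : Dense U) {V : B.Opens} (hV : IsAffineOpen V) {W : E.Opens} (hW : IsAffineOpen W)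
    (hWV : W ≤ f ⁻¹ᵁ V) (hne : (W : Set E).Nonempty) :
    ∃ B₀ : Set B, IsOpen B₀ ∧ Dense B₀ ∧ ∀ x ∈ W, f x ∈ B₀ → x ∈ closure (f ⁻¹' {f x} ∩ U) := by
  obtain ⟨z, hzW, hzU⟩ := hUd.inter_open_nonempty W W.isOpen hne
  have : Nonempty W := ⟨⟨z, hzW⟩⟩
  have : Nonempty V := ⟨⟨f z, hWV hzW⟩⟩
  obtain ⟨g, hgU, hzg⟩ := hW.exists_basicOpen_le (V := ⟨U, hUo⟩) ⟨z, hzU⟩ hzW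
  have hg : g ≠ 0 := by
    rintro rfl
    simp at hzg
  let := (f.appLE V W hWV).hom.toAlgebra
  have : Algebra.FiniteType Γ(B, V) Γ(E, W) := f.finiteType_appLE hV hW hWV
  obtain ⟨c, hc, hprime⟩ :=
    exists_isPrime_le_notMem_comap_eq (A := Γ(B, V)) (IsRegular.of_ne_zero hg).left
  have hcne : (B.basicOpen c : Set B).Nonempty :=
    (TopologicalSpace.Opens.ne_bot_iff_nonempty _).mp ((basicOpen_eq_bot_iff c).not.mpr hc)
  refine ⟨B.basicOpen c, (B.basicOpen c).isOpen, (B.basicOpen c).isOpen.dense hcne, ?_⟩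
  intro x hxW hxc
  obtain ⟨q, rfl⟩ : x ∈ Set.range hW.fromSpec := hW.range_fromSpec.symm ▸ hxW
  have hcq : Spec.map (f.appLE V W hWV) q ∈ PrimeSpectrum.basicOpen c := by
    rw [apply_fromSpec_eq_fromSpec_SpecMap_appLE f hV hW hWV] at hxc
    rw [← hV.fromSpec_preimage_basicOpen]
    exact hxc
  obtain ⟨q', hq', hle, hgq', hcomap⟩ := hprime q.asIdeal q.isPrime hcq
  let y : Spec Γ(E, W) := ⟨q', hq'⟩
  have hyg : hW.fromSpec y ∈ E.basicOpen g := by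
    have hy : y ∈ PrimeSpectrum.basicOpen g := hgq'
    rwa [← hW.fromSpec_preimage_basicOpen] at hy
  have hspecializes : hW.fromSpec y ⤳ hW.fromSpec q :=
    ((PrimeSpectrum.le_iff_specializes _ _).mp hle).map hW.fromSpec.continuous
  have hfibre : f (hW.fromSpec y) = f (hW.fromSpec q) := by
    rw [apply_fromSpec_eq_fromSpec_SpecMap_appLE f hV hW hWV,
      apply_fromSpec_eq_fromSpec_SpecMap_appLE f hV hW hWV]
    exact congrArg hV.fromSpec (PrimeSpectrum.ext hcomap)
  exact hspecializes.mem_closed isClosed_closure (subset_closure ⟨hfibre, hgU hyg⟩)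

end Fibre

theorem stmt2_general {E B : Scheme.{u}} [IsIntegral E] [IsIntegral B] (f : E ⟶ B)
    [LocallyOfFiniteType f] [QuasiCompact f] {U : Set E} (hUo : IsOpen U) (hUd : Dense U) :
    ∃ B₀ : Set B, IsOpen B₀ ∧ Dense B₀ ∧ ∀ b ∈ B₀, f ⁻¹' {b} ⊆ closure (f ⁻¹' {b} ∩ U) := by
  obtain ⟨V, hV, hηV, -⟩ := exists_isAffineOpen_mem_and_subset
    (x := genericPoint B) (U := ⊤) trivial
  have hlocal : ∀ x ∈ f ⁻¹ᵁ V, ∃ W ∈ 𝓝 x, ∃ B₁ : Set B, IsOpen B₁ ∧ Dense B₁ ∧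
      ∀ x' ∈ W, f x' ∈ B₁ → x' ∈ closure (f ⁻¹' {f x'} ∩ U) := by
    intro x hx
    obtain ⟨W, hW, hxW, hWV⟩ := exists_isAffineOpen_mem_and_subset hx
    exact ⟨W, W.isOpen.mem_nhds hxW,
      exists_isOpen_dense_forall_mem_closure_of_isAffineOpen f hUo hUd hV hW hWV ⟨x, hxW⟩⟩
  obtain ⟨B₁, hB₁o, hB₁d, hB₁⟩ :=
    exists_isOpen_dense_forall_of_isCompact (f.isCompact_preimage hV.isCompact) hlocal
  refine ⟨V ∩ B₁, V.isOpen.inter hB₁o,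
    (V.isOpen.dense ⟨_, hηV⟩).inter_of_isOpen_left hB₁d V.isOpen, ?_⟩
  rintro _ hb x rfl
  exact hB₁ x hb.1 hb.2

/-- Let `f : E → B` be a dominant morphism of irreducible varieties
(integral, separated schemes of finite type) over an algebraically closed field `k`, and
let `U ⊆ E` be a dense open subset.  Then there exists a dense open subset `B₀ ⊆ B` such
that for all `b ∈ B₀` the intersection `f⁻¹(b) ∩ U` is dense in the fibre `f⁻¹(b)`. -/
theorem stmt2 {k : Type} [Field k] [IsAlgClosed k]
    {E B : Scheme} (sE : E ⟶ Spec (CommRingCat.of k)) (sB : B ⟶ Spec (CommRingCat.of k))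
    [IsIntegral E] [IsIntegral B]
    [LocallyOfFiniteType sE] [LocallyOfFiniteType sB]
    [QuasiCompact sE] [QuasiCompact sB] [IsSeparated sE] [IsSeparated sB]
    (f : E ⟶ B) (hf : f ≫ sB = sE) [IsDominant f]
    (U : Set E) (hUopen : IsOpen U) (hUdense : Dense U) :
    ∃ B₀ : Set B, IsOpen B₀ ∧ Dense B₀ ∧ ∀ b ∈ B₀,
      (f.base ⁻¹' {b} : Set E) ⊆ closure (f.base ⁻¹' {b} ∩ U) := by
  subst hf
  have : LocallyOfFiniteType f := locallyOfFiniteType_of_comp f sB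
  have : QuasiCompact f := .of_comp f sB
  exact stmt2_general f hUopen hUdense
end

section
/- Let k ⊆ K be a field extension with K algebraically closed, and let I ⊆ K[x₁,…,xₘ] be an ideal invariant under all field automorphisms of K fixing k pointwise. If k is perfect (or more generally under Weil's hypotheses), then I is generated by its intersection with k[x₁,…,xₘ], i.e., (I ∩ k[x₁,…,xₘ])·K[x₁,…,xₘ] = I. -/
/-!
Call a nonzero vector of a subspace `W` *elementary* if its support is minimal. Elementary vectors
span `W`, and each one is determined by its support up to a scalar. So if an elementary element of
an invariant ideal is scaled to have some coefficient equal to `1`, every automorphism in the group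
fixes it, and its coefficients lie in the fixed field.

For `K` algebraically closed over a perfect field `k`, the fixed field of `Aut(K/k)` is `k`: the
Galois group of the algebraic closure of `k` in `K` moves every algebraic element outside `k`, the
translation `a ↦ a + 1` of `k[a]` moves a transcendental `a`, and both kinds of automorphism extend
to `K` along a transcendence basis.
-/

section ElementaryVectors

open Module

variable {ι K V : Type*} [DivisionRing K] [AddCommGroup V] [Module K V]

theorem support_sub_div_smul_ssubset {f g : ι →₀ K} {s : Finset ι} (hf : f.support ⊆ s)
    (hg : g.support ⊆ s) {i : ι} (hi : g i ≠ 0) :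
    (f - (f i / g i) • g).support ⊂ s := by
  have vanish : (f - (f i / g i) • g) i = 0 := by simp [hi]
  refine (Finset.ssubset_iff_of_subset fun j hj => ?_).2
    ⟨i, hg (Finsupp.mem_support_iff.2 hi), Finsupp.notMem_support_iff.2 vanish⟩
  by_contra hjs
  have hfj : f j = 0 := Finsupp.notMem_support_iff.1 fun h => hjs (hf h)
  have hgj : g j = 0 := Finsupp.notMem_support_iff.1 fun h => hjs (hg h)
  simp [hfj, hgj] at hj

/-- Elementary vectors of a subspace `W` in coordinates with respect to the basis `b`: the nonzero
vectors of `W` whose support is minimal among those of all nonzero vectors of `W`. -/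
def IsElementaryVector (b : Basis ι K V) (W : Submodule K V) : V → Prop :=
  MinimalFor (fun v => v ∈ W ∧ v ≠ 0) fun v => (b.repr v).support

variable {b : Basis ι K V} {W : Submodule K V} {v w : V}

namespace IsElementaryVector

theorem mem (hv : IsElementaryVector b W v) : v ∈ W :=
  hv.prop.1

theorem exists_repr_ne_zero (hv : IsElementaryVector b W v) : ∃ i, b.repr v i ≠ 0 := by
  simpa using Finsupp.ne_iff.1 (b.repr.map_ne_zero_iff.2 hv.prop.2)

theorem smul (hv : IsElementaryVector b W v) {c : K} (hc : c ≠ 0) :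
    IsElementaryVector b W (c • v) := by
  have supp : (b.repr (c • v)).support = (b.repr v).support := by
    rw [map_smul, Finsupp.support_smul_eq hc]
  exact ⟨⟨W.smul_mem c hv.mem, smul_ne_zero hc hv.prop.2⟩, fun w hw hle =>
    supp.trans_subset (hv.le_of_le hw (hle.trans_eq supp))⟩

theorem exists_eq_smul (hv : IsElementaryVector b W v) (hw : w ∈ W)
    (hwv : (b.repr w).support ⊆ (b.repr v).support) : ∃ c : K, w = c • v := by
  obtain ⟨i, hi⟩ := hv.exists_repr_ne_zero
  let c := b.repr w i / b.repr v i
  have smaller : (b.repr (w - c • v)).support ⊂ (b.repr v).support := by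
    rw [map_sub, map_smul]
    exact support_sub_div_smul_ssubset hwv subset_rfl hi
  have mem : w - c • v ∈ W := W.sub_mem hw (W.smul_mem c hv.mem)
  have zero : w - c • v = 0 := by
    by_contra h
    exact hv.not_lt ⟨mem, h⟩ smaller
  exact ⟨c, sub_eq_zero.1 zero⟩

end IsElementaryVector

theorem exists_isElementaryVector_support_subset (b : Basis ι K V) (hv : v ∈ W) (hv0 : v ≠ 0) :
    ∃ w, IsElementaryVector b W w ∧ (b.repr w).support ⊆ (b.repr v).support := by
  obtain ⟨w, ⟨hw, hwv⟩, hmin⟩ := exists_minimalFor_of_wellFoundedLT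
    (fun w => (w ∈ W ∧ w ≠ 0) ∧ (b.repr w).support ⊆ (b.repr v).support)
    (fun w => (b.repr w).support) ⟨v, ⟨hv, hv0⟩, subset_rfl⟩
  exact ⟨w, ⟨hw, fun u hu hle => hmin ⟨hu, hle.trans hwv⟩ hle⟩, hwv⟩

theorem span_isElementaryVector (b : Basis ι K V) (W : Submodule K V) :
    Submodule.span K {v | IsElementaryVector b W v} = W := by
  refine le_antisymm (Submodule.span_le.2 fun v hv => hv.mem) fun v hv => ?_
  induction hs : (b.repr v).support using WellFoundedLT.induction generalizing v with
  | ind s ih =>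
  subst hs
  rcases eq_or_ne v 0 with rfl | hv0
  · exact Submodule.zero_mem _
  obtain ⟨w, hw, hwv⟩ := exists_isElementaryVector_support_subset b hv hv0
  obtain ⟨i, hi⟩ := hw.exists_repr_ne_zero
  let c := b.repr v i / b.repr w i
  have smaller : (b.repr (v - c • w)).support ⊂ (b.repr v).support := by
    rw [map_sub, map_smul]
    exact support_sub_div_smul_ssubset subset_rfl hwv hi
  have rest := ih _ smaller _ (W.sub_mem hv (W.smul_mem c hw.mem)) rfl
  have w_mem : w ∈ Submodule.span K {v | IsElementaryVector b W v} := Submodule.subset_span hw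
  exact (Submodule.sub_mem_iff_left _ (Submodule.smul_mem _ c w_mem)).1 rest

end ElementaryVectors

section FixedField

theorem exists_algEquiv_extending {R A K : Type*} [CommRing R] [CommRing A] [Field K]
    [IsAlgClosed K] [Algebra R A] [Algebra R K] {f : A →ₐ[R] K} (hf : Function.Injective f)
    (τ : A ≃ₐ[R] A) : ∃ σ : K ≃ₐ[R] K, ∀ a, σ (f a) = f (τ a) := by
  let := f.toRingHom.toAlgebra
  have : IsScalarTower R A K := .of_algHom f
  have : FaithfulSMul A K := (faithfulSMul_iff_algebraMap_injective A K).2 hf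
  obtain ⟨ι, x, hx⟩ := exists_isTranscendenceBasis' A K
  have := IsAlgClosed.isAlgClosure_of_transcendence_basis x hx
  let θ := hx.1.aevalEquiv
  let e : Algebra.adjoin A (Set.range x) ≃ₐ[R] Algebra.adjoin A (Set.range x) :=
    ((θ.restrictScalars R).symm.trans (MvPolynomial.mapAlgEquiv ι τ)).trans (θ.restrictScalars R)
  let σ : K ≃+* K := IsAlgClosure.equivOfEquiv K K e.toRingEquiv
  have e_algebraMap (a : A) : e (algebraMap A _ a) = algebraMap A _ (τ a) := by
    simpa [e] using θ.commutes (τ a)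
  have extends_τ (a : A) : σ (f a) = f (τ a) := by
    have := IsAlgClosure.equivOfEquiv_algebraMap K K e.toRingEquiv (algebraMap A _ a)
    exact this.trans (congrArg (algebraMap _ K) (e_algebraMap a))
  refine ⟨AlgEquiv.ofRingEquiv (f := σ) fun r => ?_, extends_τ⟩
  rw [← f.commutes, extends_τ, τ.commutes]

variable {k K : Type*} [Field k] [Field K] [Algebra k K] [IsAlgClosed K]

theorem exists_algEquiv_apply_ne_of_transcendental {a : K} (ha : Transcendental k a) :
    ∃ σ : K ≃ₐ[k] K, σ a ≠ a := by
  have inj : Function.Injective (Polynomial.aeval (R := k) a) :=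
    transcendental_iff_injective.1 ha
  obtain ⟨σ, hσ⟩ := exists_algEquiv_extending inj (Polynomial.algEquivAevalXAddC 1)
  have translate : σ a = a + 1 := by simpa using hσ Polynomial.X
  exact ⟨σ, by simp [translate]⟩

theorem mem_bot_of_isAlgebraic_of_forall_algEquiv_apply_eq [PerfectField k] {a : K}
    (ha : IsAlgebraic k a) (hfix : ∀ σ : K ≃ₐ[k] K, σ a = a) : a ∈ (⊥ : IntermediateField k K) := by
  let L := algebraicClosure k K
  have : Normal k L := IsAlgClosure.normal k L
  have : IsGalois k L := ⟨⟩
  let a' : L := ⟨a, mem_algebraicClosure_iff.2 ha⟩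
  have fixed : ∀ τ : Gal(L/k), τ a' = a' := fun τ => by
    obtain ⟨σ, hσ⟩ := exists_algEquiv_extending L.val.injective τ
    exact Subtype.ext ((hσ a').symm.trans (hfix σ))
  obtain ⟨c, hc⟩ := (InfiniteGalois.mem_range_algebraMap_iff_fixed a').2 fixed
  exact ⟨c, congrArg Subtype.val hc⟩

variable (k K) in
theorem fixedField_top_of_isAlgClosed [PerfectField k] :
    IntermediateField.fixedField (⊤ : Subgroup Gal(K/k)) = ⊥ := by
  refine eq_bot_iff.2 fun a ha => ?_
  have hfix : ∀ σ : K ≃ₐ[k] K, σ a = a := fun σ => ha ⟨σ, trivial⟩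
  by_cases halg : IsAlgebraic k a
  · exact mem_bot_of_isAlgebraic_of_forall_algEquiv_apply_eq halg hfix
  · obtain ⟨σ, hσ⟩ := exists_algEquiv_apply_ne_of_transcendental halg
    exact absurd (hfix σ) hσ

end FixedField

section Descent

open MvPolynomial IntermediateField

variable {σ k K : Type*} [Field k] [Field K] [Algebra k K]

theorem IsElementaryVector.map_eq_self {I : Ideal (MvPolynomial σ K)} {f : MvPolynomial σ K}
    (hf : IsElementaryVector (basisMonomials σ K) (I.restrictScalars K) f) {d : σ →₀ ℕ}
    (hd : f.coeff d = 1) {τ : K →+* K} (hτ : map τ f ∈ I) : map τ f = f := by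
  obtain ⟨c, hc⟩ := hf.exists_eq_smul hτ (support_map_subset τ f)
  have c_eq_one : c = 1 := by
    simpa [coeff_map, coeff_smul, hd] using (congrArg (coeff d) hc).symm
  rw [hc, c_eq_one, one_smul]

theorem mem_range_map_of_forall_map_eq_self {H : Subgroup Gal(K/k)} (hH : fixedField H = ⊥)
    {f : MvPolynomial σ K} (hf : ∀ τ ∈ H, map (τ : K →+* K) f = f) :
    f ∈ Set.range (map (σ := σ) (algebraMap k K)) := by
  rw [mem_range_map_iff_coeffs_subset]
  intro c hc
  obtain ⟨d, -, rfl⟩ := mem_coeffs_iff.1 hc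
  have fixed : f.coeff d ∈ fixedField H := fun τ =>
    (coeff_map _ f d).symm.trans (congrArg (coeff d) (hf τ τ.2))
  rw [hH] at fixed
  exact mem_bot.1 fixed

theorem IsElementaryVector.mem_map_comap {H : Subgroup Gal(K/k)} (hH : fixedField H = ⊥)
    {I : Ideal (MvPolynomial σ K)} (hI : ∀ τ ∈ H, I.map (map (τ : K →+* K)) ≤ I)
    {f : MvPolynomial σ K}
    (hf : IsElementaryVector (basisMonomials σ K) (I.restrictScalars K) f) :
    f ∈ (I.comap (map (algebraMap k K))).map (map (algebraMap k K)) := by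
  obtain ⟨d, hd⟩ : ∃ d, f.coeff d ≠ 0 := hf.exists_repr_ne_zero
  let g := (f.coeff d)⁻¹ • f
  have hg : IsElementaryVector (basisMonomials σ K) (I.restrictScalars K) g :=
    hf.smul (inv_ne_zero hd)
  have hgd : g.coeff d = 1 := by simp [g, hd]
  have fixed : ∀ τ ∈ H, map (τ : K →+* K) g = g := fun τ hτ =>
    hg.map_eq_self hgd (hI τ hτ (Ideal.mem_map_of_mem _ hg.mem))
  obtain ⟨p, hp⟩ := mem_range_map_of_forall_map_eq_self hH fixed
  have p_mem : p ∈ I.comap (map (algebraMap k K)) := by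
    rw [Ideal.mem_comap, hp]
    exact hg.mem
  have f_eq : f = C (f.coeff d) * map (algebraMap k K) p := by
    rw [hp, ← smul_eq_C_mul, smul_inv_smul₀ hd]
  rw [f_eq]
  exact Ideal.mul_mem_left _ _ (Ideal.mem_map_of_mem _ p_mem)

theorem stmt8_general {H : Subgroup Gal(K/k)} (hH : fixedField H = ⊥)
    {I : Ideal (MvPolynomial σ K)} (hI : ∀ τ ∈ H, I.map (map (τ : K →+* K)) ≤ I) :
    (I.comap (map (algebraMap k K))).map (map (algebraMap k K)) = I := by
  refine le_antisymm Ideal.map_comap_le ?_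
  let J := (I.comap (map (algebraMap k K))).map (map (σ := σ) (algebraMap k K))
  suffices I.restrictScalars K ≤ J.restrictScalars K from this
  rw [← span_isElementaryVector (basisMonomials σ K) (I.restrictScalars K), Submodule.span_le]
  exact fun f hf => hf.mem_map_comap hH hI

end Descent

/-- Let `k ⊆ K` be a field extension with `K` algebraically closed and
`k` perfect, and let `I ⊆ K[x₁,…,xₘ]` be an ideal invariant under all field automorphisms
of `K` fixing `k` pointwise (acting coefficientwise).  Then `I` is generated by its
intersection with `k[x₁,…,xₘ]`:  `(I ∩ k[x₁,…,xₘ]) · K[x₁,…,xₘ] = I`. -/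
theorem stmt8 {k K : Type*} [Field k] [Field K] [Algebra k K] [IsAlgClosed K]
    [PerfectField k] (m : ℕ) (I : Ideal (MvPolynomial (Fin m) K))
    (hinv : ∀ σ : K ≃ₐ[k] K,
      Ideal.map (MvPolynomial.map (σ.toRingEquiv.toRingHom)) I = I) :
    Ideal.map (MvPolynomial.map (algebraMap k K))
      (Ideal.comap (MvPolynomial.map (algebraMap k K)) I) = I :=
  stmt8_general (fixedField_top_of_isAlgClosed k K) fun σ _ => (hinv σ).le
end
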